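/- For every δ ∈ (0, 1] there exists a constant C > 0 such that for every n ∈ ℤ³ and every choice of signs ε₁, ε₃, ε₄ ∈ {−1, +1}: ∑_{n₁ ∈ ℤ³} [ ⟨n₁⟩² ⟨n − n₁⟩² (1 + |ε₁⟨n⟩ − ε₃⟨n₁⟩ − ε₄⟨n − n₁⟩|) ]^{−1} ≤ C ⟨n⟩^{−2 + δ}. -/

import Mathlib

/-- Japanese bracket of a lattice point `n ∈ ℤ³`: `⟨n⟩ = (1 + |n|²)^{1/2}`. -/
noncomputable def jb (n : Fin 3 → ℤ) : ℝ :=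
  Real.sqrt (1 + ∑ i, ((n i : ℝ)) ^ 2)

/-!
Sort the frequencies `m` by the integer parts `a = ⌊⟨m⟩⌋` and `b = ⌊⟨n - m⟩⌋`, on which the summand
is determined up to constants. The unit cubes attached to a given pair `(a, b)` lie in the
intersection of two spherical shells of bounded width whose centres are `⟨n⟩` apart. In terms of
`‖x‖²` and `⟪n, x⟫` such a lens is a piece of a shell between two parallel planes, and in dimension
three its volume is at most a multiple of the product of the two widths; hence a pair accounts for
`O(a b / ⟨n⟩)` frequencies.

With `k = 1 + |τ - ε₃ a - ε₄ b|` it remains to sum `⟨n⟩⁻¹ (a b k)⁻¹` over `(a, b)`. The largest of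
`a`, `b`, `k` is at least of order `⟨n⟩`: it yields the factor `⟨n⟩^(-1 + δ)` and lends a power
`δ / 2` to each of the other two, whose product then has exponents `-(1 + δ / 2)`. Any two of the
three quantities vary independently over `ℤ²`, so each of the resulting double sums converges,
uniformly in `τ`.
-/

open MeasureTheory Module Set
open scoped ENNReal RealInnerProductSpace

section ProductMeasure

lemma measure_prod_le_mul_of_forall_section_le {α β : Type*} [MeasurableSpace α]
    [MeasurableSpace β] {μ : Measure α} {ν : Measure β} [SFinite ν] {S : Set (α × β)} {I : Set α}
    {A : ℝ≥0∞} (hS : MeasurableSet S) (hSI : ∀ w ∈ S, w.1 ∈ I)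
    (hsection : ∀ x ∈ I, ν (Prod.mk x ⁻¹' S) ≤ A) :
    μ.prod ν S ≤ A * μ I := by
  calc μ.prod ν S = ∫⁻ x, ν (Prod.mk x ⁻¹' S) ∂μ := Measure.prod_apply hS
    _ ≤ ∫⁻ x, I.indicator (fun _ => A) x ∂μ := by
        refine lintegral_mono fun x => ?_
        by_cases hx : x ∈ I
        · simpa only [indicator_of_mem hx] using hsection x hx
        · have hempty : Prod.mk x ⁻¹' S = ∅ :=
            eq_empty_of_forall_notMem fun y hy => hx (hSI (x, y) hy)
          simp only [hempty, measure_empty, zero_le]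
    _ ≤ A * μ I := lintegral_indicator_const_le I A

lemma measurePreserving_euclideanSpace_head_tail (d : ℕ) :
    MeasurePreserving (fun x : EuclideanSpace ℝ (Fin (d + 1)) =>
      ((x 0, WithLp.toLp 2 (Fin.tail x.ofLp)) : ℝ × EuclideanSpace ℝ (Fin d))) :=
  ((MeasurePreserving.id volume).prod (PiLp.volume_preserving_toLp (Fin d))).comp
    ((volume_preserving_piFinSuccAbove (fun _ : Fin (d + 1) => ℝ) 0).comp
      (PiLp.volume_preserving_ofLp (Fin (d + 1))))

end ProductMeasure

section SphericalShells

lemma volume_norm_sq_mem_Icc_le (p q : ℝ) :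
    volume {z : EuclideanSpace ℝ (Fin 2) | ‖z‖ ^ 2 ∈ Icc p q}
      ≤ ENNReal.ofReal (Real.pi * (q - p)) := by
  rcases lt_or_ge q p with hqp | hpq
  · simp [Icc_eq_empty_of_lt hqp]
  have hsubset : {z : EuclideanSpace ℝ (Fin 2) | ‖z‖ ^ 2 ∈ Icc p q} ⊆
      Metric.closedBall 0 √q \ Metric.ball 0 √p := fun z ⟨hp, hq⟩ =>
    ⟨mem_closedBall_zero_iff.mpr (Real.le_sqrt_of_sq_le hq), fun hz =>
      (mem_ball_zero_iff.mp hz).not_ge (Real.sqrt_le_left (norm_nonneg z) |>.mpr hp)⟩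
  have hradii : √q ^ 2 - √p ^ 2 ≤ q - p := by
    rw [Real.sq_sqrt', Real.sq_sqrt']
    exact (max_sub_max_le_max q 0 p 0).trans_eq (by simp [hpq])
  calc volume {z : EuclideanSpace ℝ (Fin 2) | ‖z‖ ^ 2 ∈ Icc p q}
      ≤ volume (Metric.closedBall (0 : EuclideanSpace ℝ (Fin 2)) √q \ Metric.ball 0 √p) :=
        measure_mono hsubset
    _ = volume (Metric.closedBall (0 : EuclideanSpace ℝ (Fin 2)) √q) -
          volume (Metric.ball (0 : EuclideanSpace ℝ (Fin 2)) √p) :=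
        measure_sdiff (Metric.ball_subset_closedBall.trans
            (Metric.closedBall_subset_closedBall (Real.sqrt_le_sqrt hpq)))
          measurableSet_ball.nullMeasurableSet measure_ball_lt_top.ne
    _ = ENNReal.ofReal (Real.pi * (√q ^ 2 - √p ^ 2)) := by
        rw [EuclideanSpace.volume_closedBall_fin_two, EuclideanSpace.volume_ball_fin_two,
          ← ENNReal.ofReal_pow (Real.sqrt_nonneg _), ← ENNReal.ofReal_pow (Real.sqrt_nonneg _),
          ← ENNReal.ofReal_mul (by positivity), ← ENNReal.ofReal_mul (by positivity),
          ← ENNReal.ofReal_sub _ (by positivity)]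
        ring_nf
    _ ≤ ENNReal.ofReal (Real.pi * (q - p)) := by gcongr

lemma exists_orthonormalBasis_apply_eq {ι E : Type*} [Fintype ι] [NormedAddCommGroup E]
    [InnerProductSpace ℝ E] [FiniteDimensional ℝ E] (hE : finrank ℝ E = Fintype.card ι)
    {u : E} (hu : ‖u‖ = 1) (i : ι) :
    ∃ b : OrthonormalBasis ι ℝ E, b i = u := by
  have hsingle : Orthonormal ℝ (({i} : Set ι).domRestrict fun _ => u) :=
    ⟨fun _ => hu, fun j k hjk => (hjk (Subsingleton.elim j k)).elim⟩
  obtain ⟨b, hb⟩ := hsingle.exists_orthonormalBasis_extension_of_card_eq hE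
  exact ⟨b, hb i rfl⟩

lemma volume_coord_mem_Icc_norm_sq_mem_Icc_le (c d p q : ℝ) :
    volume {x : EuclideanSpace ℝ (Fin 3) | x 0 ∈ Icc c d ∧ ‖x‖ ^ 2 ∈ Icc p q}
      ≤ ENNReal.ofReal (Real.pi * (q - p)) * ENNReal.ofReal (d - c) := by
  let S : Set (ℝ × EuclideanSpace ℝ (Fin 2)) :=
    {w | w.1 ∈ Icc c d ∧ w.1 ^ 2 + ‖w.2‖ ^ 2 ∈ Icc p q}
  have hS : MeasurableSet S :=
    (measurableSet_Icc.preimage measurable_fst).inter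
      (measurableSet_Icc.preimage (by fun_prop :
        Measurable fun w : ℝ × EuclideanSpace ℝ (Fin 2) => w.1 ^ 2 + ‖w.2‖ ^ 2))
  have hpreimage : {x : EuclideanSpace ℝ (Fin 3) | x 0 ∈ Icc c d ∧ ‖x‖ ^ 2 ∈ Icc p q} =
      (fun x => (x 0, WithLp.toLp 2 (Fin.tail x.ofLp))) ⁻¹' S := by
    ext x
    simp [S, EuclideanSpace.norm_sq_eq, Fin.sum_univ_succ, Fin.tail]
  rw [hpreimage, (measurePreserving_euclideanSpace_head_tail 2).measure_preimage
    hS.nullMeasurableSet, ← Real.volume_Icc]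
  -- As in Archimedes' hat-box theorem, the area of the section does not depend on its height `t`.
  refine measure_prod_le_mul_of_forall_section_le hS (fun w hw => hw.1) fun t _ => ?_
  calc volume (Prod.mk t ⁻¹' S)
      ≤ volume {z : EuclideanSpace ℝ (Fin 2) | ‖z‖ ^ 2 ∈ Icc (p - t ^ 2) (q - t ^ 2)} :=
        measure_mono fun z hz => ⟨sub_le_iff_le_add'.mpr hz.2.1, le_sub_iff_add_le'.mpr hz.2.2⟩
    _ ≤ ENNReal.ofReal (Real.pi * (q - p)) :=
        (volume_norm_sq_mem_Icc_le _ _).trans_eq (by ring_nf)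

variable {E : Type*} [NormedAddCommGroup E] [InnerProductSpace ℝ E] [FiniteDimensional ℝ E]
  [MeasurableSpace E] [BorelSpace E]

lemma volume_inner_mem_Icc_norm_sq_mem_Icc_le (hE : finrank ℝ E = 3) {u : E} (hu : ‖u‖ = 1)
    (c d p q : ℝ) :
    volume {x : E | ⟪u, x⟫ ∈ Icc c d ∧ ‖x‖ ^ 2 ∈ Icc p q}
      ≤ ENNReal.ofReal (Real.pi * (q - p)) * ENNReal.ofReal (d - c) := by
  obtain ⟨b, rfl⟩ := exists_orthonormalBasis_apply_eq (by simpa using hE) hu (0 : Fin 3)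
  have hpreimage : {x : E | ⟪b 0, x⟫ ∈ Icc c d ∧ ‖x‖ ^ 2 ∈ Icc p q} =
      b.repr ⁻¹' {y | y 0 ∈ Icc c d ∧ ‖y‖ ^ 2 ∈ Icc p q} := by
    ext x
    simp only [mem_preimage, mem_ofPred_eq, b.repr_apply_apply, LinearIsometryEquiv.norm_map]
  rw [hpreimage]
  exact (b.measurePreserving_repr.measure_preimage_le _).trans
    (volume_coord_mem_Icc_norm_sq_mem_Icc_le c d p q)

lemma volume_norm_sq_mem_Icc_norm_sub_sq_mem_Icc_le (hE : finrank ℝ E = 3) {v : E} (hv : v ≠ 0)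
    (p q p' q' : ℝ) :
    volume {x : E | ‖x‖ ^ 2 ∈ Icc p q ∧ ‖x - v‖ ^ 2 ∈ Icc p' q'}
      ≤ ENNReal.ofReal (Real.pi * (q - p)) *
          ENNReal.ofReal ((q - p + (q' - p')) / (2 * ‖v‖)) := by
  let c := (p + ‖v‖ ^ 2 - q') / (2 * ‖v‖)
  let d := (q + ‖v‖ ^ 2 - p') / (2 * ‖v‖)
  have hslab : {x : E | ‖x‖ ^ 2 ∈ Icc p q ∧ ‖x - v‖ ^ 2 ∈ Icc p' q'} ⊆
      {x : E | ⟪‖v‖⁻¹ • v, x⟫ ∈ Icc c d ∧ ‖x‖ ^ 2 ∈ Icc p q} := by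
    rintro x ⟨hx, hxv⟩
    have hinner : ⟪‖v‖⁻¹ • v, x⟫ = (‖x‖ ^ 2 + ‖v‖ ^ 2 - ‖x - v‖ ^ 2) / (2 * ‖v‖) := by
      rw [real_inner_smul_left, real_inner_comm, norm_sub_sq_real]
      field_simp
      ring
    refine ⟨?_, hx⟩
    rw [hinner]
    constructor
    · exact div_le_div_of_nonneg_right (by linarith [hx.1, hxv.2]) (by positivity)
    · exact div_le_div_of_nonneg_right (by linarith [hx.2, hxv.1]) (by positivity)
  have hwidth : d - c = (q - p + (q' - p')) / (2 * ‖v‖) := by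
    simp only [c, d]
    ring
  rw [← hwidth]
  exact (measure_mono hslab).trans
    (volume_inner_mem_Icc_norm_sq_mem_Icc_le hE (norm_smul_inv_norm hv) c d p q)

lemma sq_mem_Icc_of_abs_sub_le {x a r : ℝ} (h : |x - a| ≤ r) :
    x ^ 2 ∈ Icc (a ^ 2 - r * (2 * |a| + r)) (a ^ 2 + r * (2 * |a| + r)) := by
  have hr : 0 ≤ r := (abs_nonneg _).trans h
  have hsum : |x + a| ≤ 2 * |a| + r := by
    calc |x + a| = |(x - a) + 2 * a| := by ring_nf
      _ ≤ |x - a| + |2 * a| := abs_add_le _ _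
      _ ≤ 2 * |a| + r := by rw [abs_mul, abs_two]; linarith
  have hdiff : |x ^ 2 - a ^ 2| ≤ r * (2 * |a| + r) := by
    rw [show x ^ 2 - a ^ 2 = (x - a) * (x + a) by ring, abs_mul]
    gcongr
  exact mem_Icc_iff_abs_le.mp (by rwa [abs_sub_comm])

lemma volume_shell_inter_shell_le (hE : finrank ℝ E = 3) {v : E} (hv : v ≠ 0) {r : ℝ}
    (hr : 0 ≤ r) (a b : ℝ) :
    volume {x : E | |‖x‖ - a| ≤ r ∧ |‖x - v‖ - b| ≤ r}
      ≤ ENNReal.ofReal (4 * Real.pi * r ^ 2 * (2 * |a| + r) * (2 * |b| + r) / ‖v‖) := by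
  wlog hab : |a| ≤ |b| generalizing a b
  · have hreflect : {x : E | |‖x‖ - a| ≤ r ∧ |‖x - v‖ - b| ≤ r} =
        (fun x => v - x) ⁻¹' {x : E | |‖x‖ - b| ≤ r ∧ |‖x - v‖ - a| ≤ r} := by
      ext x
      simp [norm_sub_rev v x, and_comm]
    rw [hreflect, mul_right_comm (4 * Real.pi * r ^ 2)]
    exact ((Measure.measurePreserving_sub_left volume v).measure_preimage_le _).trans
      (this b a (not_le.mp hab).le)
  let ρ (t : ℝ) : ℝ := r * (2 * |t| + r)
  have hρ : ρ a ≤ ρ b := by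
    simp only [ρ]
    gcongr
  calc volume {x : E | |‖x‖ - a| ≤ r ∧ |‖x - v‖ - b| ≤ r}
      ≤ volume {x : E | ‖x‖ ^ 2 ∈ Icc (a ^ 2 - ρ a) (a ^ 2 + ρ a) ∧
          ‖x - v‖ ^ 2 ∈ Icc (b ^ 2 - ρ b) (b ^ 2 + ρ b)} :=
        measure_mono fun x hx =>
          ⟨sq_mem_Icc_of_abs_sub_le hx.1, sq_mem_Icc_of_abs_sub_le hx.2⟩
    _ ≤ ENNReal.ofReal (Real.pi * (2 * ρ a) * ((2 * ρ a + 2 * ρ b) / (2 * ‖v‖))) := by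
        rw [ENNReal.ofReal_mul (by positivity)]
        convert volume_norm_sq_mem_Icc_norm_sub_sq_mem_Icc_le hE hv _ _ _ _ using 4 <;> ring
    _ ≤ ENNReal.ofReal (Real.pi * (2 * ρ a) * ((2 * ρ b + 2 * ρ b) / (2 * ‖v‖))) := by gcongr
    _ = ENNReal.ofReal (4 * Real.pi * r ^ 2 * (2 * |a| + r) * (2 * |b| + r) / ‖v‖) := by
        congr 1
        simp only [ρ]
        ring

end SphericalShells
section LatticePoints

variable {ι : Type*}

/-- The inclusion `ℤ^ι ⊆ ℝ^ι`. -/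
noncomputable def latticePoint (m : ι → ℤ) : EuclideanSpace ℝ ι :=
  WithLp.toLp 2 fun i => (m i : ℝ)

/-- The lattice point at the lowest corner of the unit cube containing `x`. -/
noncomputable def latticeFloor (x : EuclideanSpace ℝ ι) : ι → ℤ :=
  fun i => ⌊x i⌋

lemma latticePoint_add (m k : ι → ℤ) :
    latticePoint (m + k) = latticePoint m + latticePoint k := by
  ext i
  simp [latticePoint]

lemma latticePoint_sub (m k : ι → ℤ) :
    latticePoint (m - k) = latticePoint m - latticePoint k := by
  ext i
  simp [latticePoint]

variable [Fintype ι]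

lemma norm_sub_latticePoint_latticeFloor_le (x : EuclideanSpace ℝ ι) :
    ‖x - latticePoint (latticeFloor x)‖ ≤ √(Fintype.card ι) := by
  rw [EuclideanSpace.norm_eq]
  refine Real.sqrt_le_sqrt ?_
  calc ∑ i, ‖(x - latticePoint (latticeFloor x)) i‖ ^ 2 = ∑ i, Int.fract (x i) ^ 2 := by
        simp [latticePoint, latticeFloor]
    _ ≤ ∑ _i : ι, (1 : ℝ) := Finset.sum_le_sum fun i _ =>
        pow_le_one₀ (Int.fract_nonneg _) (Int.fract_lt_one _).le
    _ = Fintype.card ι := by simp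

lemma measurePreserving_latticeFloor :
    MeasurePreserving (latticeFloor : EuclideanSpace ℝ ι → ι → ℤ) volume Measure.count := by
  have hmeas : Measurable (latticeFloor : EuclideanSpace ℝ ι → ι → ℤ) :=
    measurable_pi_lambda _ fun i => Int.measurable_floor.comp (by fun_prop)
  refine ⟨hmeas, Measure.ext_of_singleton fun m => ?_⟩
  have hcube : latticeFloor ⁻¹' {m} = (WithLp.ofLp : EuclideanSpace ℝ ι → ι → ℝ) ⁻¹'
      univ.pi fun i => Ico (m i : ℝ) (m i + 1) := by
    ext x
    simp [latticeFloor, funext_iff, Int.floor_eq_iff]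
  rw [Measure.map_apply hmeas (measurableSet_singleton m), Measure.count_singleton, hcube,
    (PiLp.volume_preserving_ofLp ι).measure_preimage
      (MeasurableSet.univ_pi fun _ => measurableSet_Ico).nullMeasurableSet, volume_pi_pi]
  simp

lemma encard_le_volume_of_latticeFloor_preimage_subset {F : Set (ι → ℤ)}
    {S : Set (EuclideanSpace ℝ ι)} (h : latticeFloor ⁻¹' F ⊆ S) :
    (F.encard : ℝ≥0∞) ≤ volume S := by
  have hF : MeasurableSet F := F.to_countable.measurableSet
  rw [← Measure.count_apply hF,
    ← measurePreserving_latticeFloor.measure_preimage hF.nullMeasurableSet]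
  exact measure_mono h

end LatticePoints

section JapaneseBracket

lemma jb_eq_sqrt_norm (m : Fin 3 → ℤ) : jb m = √(1 + ‖latticePoint m‖ ^ 2) := by
  simp [jb, latticePoint, EuclideanSpace.norm_sq_eq]

lemma jb_sq (m : Fin 3 → ℤ) : jb m ^ 2 = 1 + ‖latticePoint m‖ ^ 2 := by
  rw [jb_eq_sqrt_norm, Real.sq_sqrt (by positivity)]

lemma one_le_jb (m : Fin 3 → ℤ) : 1 ≤ jb m := by
  rw [jb_eq_sqrt_norm, Real.one_le_sqrt]
  linarith [sq_nonneg ‖latticePoint m‖]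

lemma jb_pos (m : Fin 3 → ℤ) : 0 < jb m :=
  one_pos.trans_le (one_le_jb m)

lemma norm_latticePoint_le_jb (m : Fin 3 → ℤ) : ‖latticePoint m‖ ≤ jb m := by
  rw [jb_eq_sqrt_norm]
  exact Real.le_sqrt_of_sq_le (by linarith)

lemma jb_le_norm_latticePoint_add_one (m : Fin 3 → ℤ) : jb m ≤ ‖latticePoint m‖ + 1 := by
  nlinarith [jb_sq m, one_le_jb m, norm_nonneg (latticePoint m)]

lemma jb_add_le (m k : Fin 3 → ℤ) : jb (m + k) ≤ jb m + jb k := by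
  have hm := jb_pos m
  have hk := jb_pos k
  refine le_of_sq_le_sq ?_ (by positivity)
  have hnorm : ‖latticePoint (m + k)‖ ≤ ‖latticePoint m‖ + ‖latticePoint k‖ := by
    rw [latticePoint_add]
    exact norm_add_le _ _
  calc jb (m + k) ^ 2 = 1 + ‖latticePoint (m + k)‖ ^ 2 := jb_sq _
    _ ≤ 2 + (‖latticePoint m‖ + ‖latticePoint k‖) ^ 2 := by gcongr; norm_num
    _ = jb m ^ 2 + jb k ^ 2 + 2 * (‖latticePoint m‖ * ‖latticePoint k‖) := by
        rw [jb_sq, jb_sq]; ring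
    _ ≤ jb m ^ 2 + jb k ^ 2 + 2 * (jb m * jb k) := by
        gcongr <;> exact norm_latticePoint_le_jb _
    _ = (jb m + jb k) ^ 2 := by ring

end JapaneseBracket

section LatticeCount

/-- The pair of unit shells containing the two interacting frequencies `m` and `n - m`. On each
fiber of `shellIndex n` the resonance function is constant up to `O(1)`. -/
noncomputable def shellIndex (n m : Fin 3 → ℤ) : ℤ × ℤ :=
  (⌊jb m⌋, ⌊jb (n - m)⌋)

lemma exists_norm_sub_eq_one_and_norm_eq_add_one {E : Type*} [NormedAddCommGroup E]
    [NormedSpace ℝ E] [Nontrivial E] (w : E) :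
    ∃ v : E, ‖v - w‖ = 1 ∧ ‖v‖ = ‖w‖ + 1 := by
  obtain ⟨u, hu, hray⟩ : ∃ u : E, ‖u‖ = 1 ∧ SameRay ℝ w u := by
    rcases eq_or_ne w 0 with rfl | hw
    · obtain ⟨u, hu⟩ := exists_norm_eq E zero_le_one
      exact ⟨u, hu, SameRay.zero_left u⟩
    · exact ⟨‖w‖⁻¹ • w, norm_smul_inv_norm hw,
        SameRay.sameRay_nonneg_smul_right w (by positivity)⟩
  exact ⟨w + u, by simpa using hu, by rw [hray.norm_add, hu]⟩

lemma abs_norm_sub_floor_jb_le (y : EuclideanSpace ℝ (Fin 3)) (m : Fin 3 → ℤ) :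
    |‖y‖ - ⌊jb m⌋| ≤ ‖y - latticePoint m‖ + 2 := by
  have hnorm := abs_le.mp (abs_norm_sub_norm_le y (latticePoint m))
  have hle := norm_latticePoint_le_jb m
  have hge := jb_le_norm_latticePoint_add_one m
  have hfloor := Int.floor_le (jb m)
  have hfloor' := Int.lt_floor_add_one (jb m)
  exact abs_le.mpr ⟨by linarith [hnorm.1], by linarith [hnorm.2]⟩

lemma latticeFloor_preimage_shellIndex_fiber_subset {n : Fin 3 → ℤ}
    {v : EuclideanSpace ℝ (Fin 3)} (hv : ‖v - latticePoint n‖ = 1) (p : ℤ × ℤ) :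
    latticeFloor ⁻¹' (shellIndex n ⁻¹' {p}) ⊆ {x | |‖x‖ - p.1| ≤ 5 ∧ |‖x - v‖ - p.2| ≤ 5} := by
  rintro x rfl
  set m := latticeFloor x
  have hcube : ‖x - latticePoint m‖ ≤ 2 := by
    refine (norm_sub_latticePoint_latticeFloor_le x).trans ?_
    rw [Fintype.card_fin, Real.sqrt_le_left two_pos.le]
    norm_num
  have hcube' : ‖(v - x) - latticePoint (n - m)‖ ≤ 3 := by
    calc ‖(v - x) - latticePoint (n - m)‖ = ‖(v - latticePoint n) - (x - latticePoint m)‖ := by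
          rw [latticePoint_sub]
          congr 1
          abel
      _ ≤ 1 + 2 := (norm_sub_le _ _).trans (add_le_add hv.le hcube)
      _ = 3 := by norm_num
  constructor
  · exact (abs_norm_sub_floor_jb_le x m).trans (by linarith)
  · rw [norm_sub_rev]
    exact (abs_norm_sub_floor_jb_le (v - x) (n - m)).trans (by linarith)

lemma encard_shellIndex_fiber_le (n : Fin 3 → ℤ) (p : ℤ × ℤ) :
    ((shellIndex n ⁻¹' {p}).encard : ℝ≥0∞) ≤
      ENNReal.ofReal (2500 * Real.pi * ((1 + |(p.1 : ℝ)|) * (1 + |(p.2 : ℝ)|)) / jb n) := by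
  obtain ⟨v, hvn, hv⟩ := exists_norm_sub_eq_one_and_norm_eq_add_one (latticePoint n)
  have hv0 : v ≠ 0 := norm_pos_iff.mp (by rw [hv]; positivity)
  have hnv : jb n ≤ ‖v‖ := hv ▸ jb_le_norm_latticePoint_add_one n
  have hn := jb_pos n
  calc ((shellIndex n ⁻¹' {p}).encard : ℝ≥0∞)
      ≤ volume {x : EuclideanSpace ℝ (Fin 3) | |‖x‖ - p.1| ≤ 5 ∧ |‖x - v‖ - p.2| ≤ 5} :=
        encard_le_volume_of_latticeFloor_preimage_subset
          (latticeFloor_preimage_shellIndex_fiber_subset hvn p)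
    _ ≤ ENNReal.ofReal (4 * Real.pi * 5 ^ 2 * (2 * |(p.1 : ℝ)| + 5) * (2 * |(p.2 : ℝ)| + 5) /
          ‖v‖) :=
        volume_shell_inter_shell_le finrank_euclideanSpace_fin hv0 (by norm_num) _ _
    _ ≤ ENNReal.ofReal (4 * Real.pi * 5 ^ 2 * (5 * (1 + |(p.1 : ℝ)|)) * (5 * (1 + |(p.2 : ℝ)|)) /
          jb n) := by
        gcongr <;> linarith [abs_nonneg (p.1 : ℝ), abs_nonneg (p.2 : ℝ)]
    _ = ENNReal.ofReal (2500 * Real.pi * ((1 + |(p.1 : ℝ)|) * (1 + |(p.2 : ℝ)|)) / jb n) := by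
        ring_nf

end LatticeCount
section DecaySums

/-- The weight `(1 + |x|)⁻ˢ` on the line, comparable to `⟨x⟩⁻ˢ`; it is summable over `ℤ` for
`s > 1`. -/
noncomputable def decay (s x : ℝ) : ℝ :=
  (1 + |x|) ^ (-s)

lemma decay_nonneg (s x : ℝ) : 0 ≤ decay s x := by
  unfold decay
  positivity

lemma tsum_ofReal_decay_ne_top {s : ℝ} (hs : 1 < s) :
    ∑' j : ℤ, ENNReal.ofReal (decay s j) ≠ ∞ := by
  have hnat : Summable fun j : ℕ => (1 + (j : ℝ)) ^ (-s) := by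
    simpa [add_comm] using
      (summable_nat_add_iff 1).mpr (Real.summable_nat_rpow.mpr (neg_lt_neg hs))
  exact (Summable.of_nat_of_neg (by simpa [decay] using hnat)
    (by simpa [decay] using hnat)).tsum_ofReal_ne_top

lemma decay_le_two_rpow_mul_decay {s x y : ℝ} (hs : 0 ≤ s) (hxy : |y - x| ≤ 1) :
    decay s x ≤ 2 ^ s * decay s y := by
  have hy : (1 + |y|) / 2 ≤ 1 + |x| := by
    linarith [abs_sub_abs_le_abs_sub y x, abs_nonneg x]
  calc decay s x ≤ ((1 + |y|) / 2) ^ (-s) :=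
        Real.rpow_le_rpow_of_nonpos (by positivity) hy (neg_nonpos.mpr hs)
    _ = 2 ^ s * decay s y := by
        rw [decay, Real.div_rpow (by positivity) two_pos.le, Real.rpow_neg two_pos.le,
          div_inv_eq_mul, mul_comm]

lemma tsum_ofReal_decay_sub_le {s : ℝ} (hs : 0 ≤ s) (c : ℝ) :
    ∑' j : ℤ, ENNReal.ofReal (decay s (c - j)) ≤
      ENNReal.ofReal (2 ^ s) * ∑' j : ℤ, ENNReal.ofReal (decay s j) := by
  calc ∑' j : ℤ, ENNReal.ofReal (decay s (c - j))
      ≤ ∑' j : ℤ, ENNReal.ofReal (2 ^ s) * ENNReal.ofReal (decay s ((⌊c⌋ - j : ℤ) : ℝ)) := by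
        refine ENNReal.tsum_le_tsum fun j => ?_
        rw [← ENNReal.ofReal_mul (by positivity)]
        refine ENNReal.ofReal_le_ofReal (decay_le_two_rpow_mul_decay hs ?_)
        push_cast
        rw [sub_sub_sub_cancel_right, abs_sub_comm, Int.self_sub_floor, Int.abs_fract]
        exact (Int.fract_lt_one c).le
    _ = ENNReal.ofReal (2 ^ s) * ∑' j : ℤ, ENNReal.ofReal (decay s j) := by
        rw [ENNReal.tsum_mul_left]
        congr 1
        exact (Equiv.subLeft ⌊c⌋).tsum_eq fun j : ℤ => ENNReal.ofReal (decay s j)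

lemma tsum_ofReal_decay_sub_mul_le {s ε : ℝ} (hs : 0 ≤ s) (hε : |ε| = 1) (c : ℝ) :
    ∑' j : ℤ, ENNReal.ofReal (decay s (c - ε * j)) ≤
      ENNReal.ofReal (2 ^ s) * ∑' j : ℤ, ENNReal.ofReal (decay s j) := by
  have hscale (j : ℤ) : decay s (c - ε * j) = decay s (ε * c - j) := by
    have habs : |ε * (c - ε * j)| = |c - ε * j| := by rw [abs_mul, hε, one_mul]
    have hsq : ε * ε = 1 := by rw [← abs_mul_abs_self, hε, one_mul]
    rw [decay, ← habs, mul_sub, ← mul_assoc, hsq, one_mul, decay]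
  simpa only [hscale] using tsum_ofReal_decay_sub_le hs (ε * c)

lemma tsum_prod_mul_le {α β : Type*} (f : α → ℝ≥0∞) (g : α → β → ℝ≥0∞) {W : ℝ≥0∞}
    (hg : ∀ a, ∑' b, g a b ≤ W) :
    ∑' p : α × β, f p.1 * g p.1 p.2 ≤ (∑' a, f a) * W := by
  calc ∑' p : α × β, f p.1 * g p.1 p.2 = ∑' a, f a * ∑' b, g a b := by
        simp only [ENNReal.tsum_prod', ENNReal.tsum_mul_left]
    _ ≤ ∑' a, f a * W := ENNReal.tsum_le_tsum fun a => by gcongr; exact hg a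
    _ = (∑' a, f a) * W := ENNReal.tsum_mul_right

/-- The weight of the pair of unit shells `p`, one term for each choice of two of the three
quantities `p.1`, `p.2` and `τ - ε₃ p.1 - ε₄ p.2`; the last one is the resonance function on these
shells. -/
noncomputable def shellWeight (s τ ε₃ ε₄ : ℝ) (p : ℤ × ℤ) : ℝ :=
  decay s p.1 * decay s p.2 + decay s p.1 * decay s (τ - ε₃ * p.1 - ε₄ * p.2) +
    decay s p.2 * decay s (τ - ε₃ * p.1 - ε₄ * p.2)

lemma shellWeight_nonneg (s τ ε₃ ε₄ : ℝ) (p : ℤ × ℤ) : 0 ≤ shellWeight s τ ε₃ ε₄ p := by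
  have hdecay := decay_nonneg s
  exact add_nonneg (add_nonneg (mul_nonneg (hdecay _) (hdecay _))
    (mul_nonneg (hdecay _) (hdecay _))) (mul_nonneg (hdecay _) (hdecay _))

lemma exists_forall_tsum_ofReal_shellWeight_le {s : ℝ} (hs : 1 < s) :
    ∃ M : ℝ, 0 < M ∧ ∀ τ ε₃ ε₄ : ℝ, |ε₃| = 1 → |ε₄| = 1 →
      ∑' p : ℤ × ℤ, ENNReal.ofReal (shellWeight s τ ε₃ ε₄ p) ≤ ENNReal.ofReal M := by
  have hs0 : 0 ≤ s := zero_le_one.trans hs.le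
  let D := ∑' j : ℤ, ENNReal.ofReal (decay s j)
  let W := ENNReal.ofReal (2 ^ s) * D
  have hD : D ≠ ∞ := tsum_ofReal_decay_ne_top hs
  have hM : D * D + D * W + D * W ≠ ∞ := by finiteness
  refine ⟨(D * D + D * W + D * W).toReal + 1, by positivity, fun τ ε₃ ε₄ h₃ h₄ => ?_⟩
  have hsplit (p : ℤ × ℤ) : ENNReal.ofReal (shellWeight s τ ε₃ ε₄ p) =
      ENNReal.ofReal (decay s p.1) * ENNReal.ofReal (decay s p.2) +
      ENNReal.ofReal (decay s p.1) * ENNReal.ofReal (decay s (τ - ε₃ * p.1 - ε₄ * p.2)) +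
      ENNReal.ofReal (decay s p.2) * ENNReal.ofReal (decay s (τ - ε₃ * p.1 - ε₄ * p.2)) := by
    have hdecay := decay_nonneg s
    have hmul (x y : ℝ) : 0 ≤ decay s x * decay s y := mul_nonneg (hdecay x) (hdecay y)
    rw [shellWeight, ENNReal.ofReal_add (add_nonneg (hmul _ _) (hmul _ _)) (hmul _ _),
      ENNReal.ofReal_add (hmul _ _) (hmul _ _)]
    simp only [ENNReal.ofReal_mul (hdecay _)]
  calc ∑' p : ℤ × ℤ, ENNReal.ofReal (shellWeight s τ ε₃ ε₄ p) ≤ D * D + D * W + D * W := by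
        simp only [hsplit, ENNReal.tsum_add]
        gcongr
        · exact tsum_prod_mul_le _ (fun _ (j : ℤ) => ENNReal.ofReal (decay s j)) fun _ => le_rfl
        · exact tsum_prod_mul_le _ (fun i j : ℤ => ENNReal.ofReal (decay s (τ - ε₃ * i - ε₄ * j)))
            fun i => tsum_ofReal_decay_sub_mul_le hs0 h₄ _
        · rw [← (Equiv.prodComm ℤ ℤ).tsum_eq]
          refine tsum_prod_mul_le _
            (fun j i : ℤ => ENNReal.ofReal (decay s (τ - ε₃ * i - ε₄ * j))) fun j => ?_
          simpa only [sub_right_comm] using tsum_ofReal_decay_sub_mul_le hs0 h₃ (τ - ε₄ * j)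
    _ ≤ ENNReal.ofReal ((D * D + D * W + D * W).toReal + 1) :=
        (ENNReal.le_ofReal_iff_toReal_le hM (by positivity)).mpr (by linarith)

end DecaySums

section ShellEstimates

lemma inv_mul_mul_le_rpow_mul_of_le {δ x y z : ℝ} (hδ : 0 ≤ δ) (hx : 0 < x) (hy : 0 < y)
    (hxz : x ≤ z) (hyz : y ≤ z) :
    (x * y * z)⁻¹ ≤ z ^ (-1 + δ) * (x ^ (-(1 + δ / 2)) * y ^ (-(1 + δ / 2))) := by
  have hz : 0 < z := hx.trans_le hxz
  have hanti {t : ℝ} (ht : 0 < t) (htz : t ≤ z) : z ^ (-(δ / 2)) ≤ t ^ (-(δ / 2)) :=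
    Real.rpow_le_rpow_of_nonpos ht htz (by linarith)
  have hsplit {t : ℝ} (ht : 0 < t) : t ^ (-(1 + δ / 2)) = t⁻¹ * t ^ (-(δ / 2)) := by
    rw [neg_add, Real.rpow_add ht, Real.rpow_neg_one]
  have hzinv : z⁻¹ = z ^ (-1 + δ) * (z ^ (-(δ / 2)) * z ^ (-(δ / 2))) := by
    rw [← Real.rpow_add hz, ← Real.rpow_add hz, ← Real.rpow_neg_one]
    ring_nf
  calc (x * y * z)⁻¹
      = z ^ (-1 + δ) * ((x⁻¹ * z ^ (-(δ / 2))) * (y⁻¹ * z ^ (-(δ / 2)))) := by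
        rw [mul_inv, mul_inv, hzinv]
        ring
    _ ≤ z ^ (-1 + δ) * ((x⁻¹ * x ^ (-(δ / 2))) * (y⁻¹ * y ^ (-(δ / 2)))) := by
        have hx' := hanti hx hxz
        have hy' := hanti hy hyz
        gcongr
    _ = z ^ (-1 + δ) * (x ^ (-(1 + δ / 2)) * y ^ (-(1 + δ / 2))) := by
        rw [hsplit hx, hsplit hy]

lemma inv_mul_mul_le_rpow_mul_sum {δ L x y z : ℝ} (hδ0 : 0 ≤ δ) (hδ1 : δ ≤ 1) (hx : 0 < x)
    (hy : 0 < y) (hz : 0 < z) (hL : 0 < L) (hmax : L ≤ max (max x y) z) :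
    (x * y * z)⁻¹ ≤ L ^ (-1 + δ) * (x ^ (-(1 + δ / 2)) * y ^ (-(1 + δ / 2)) +
      x ^ (-(1 + δ / 2)) * z ^ (-(1 + δ / 2)) + y ^ (-(1 + δ / 2)) * z ^ (-(1 + δ / 2))) := by
  have hlargest {a b c : ℝ} (ha : 0 < a) (hb : 0 < b) (hac : a ≤ c) (hbc : b ≤ c) (hLc : L ≤ c) :
      (a * b * c)⁻¹ ≤ L ^ (-1 + δ) * (a ^ (-(1 + δ / 2)) * b ^ (-(1 + δ / 2))) := by
    refine (inv_mul_mul_le_rpow_mul_of_le hδ0 ha hb hac hbc).trans ?_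
    have := Real.rpow_le_rpow_of_nonpos hL hLc (by linarith : -1 + δ ≤ 0)
    gcongr
  have hxy : 0 ≤ L ^ (-1 + δ) * (x ^ (-(1 + δ / 2)) * y ^ (-(1 + δ / 2))) := by positivity
  have hxz : 0 ≤ L ^ (-1 + δ) * (x ^ (-(1 + δ / 2)) * z ^ (-(1 + δ / 2))) := by positivity
  have hyz : 0 ≤ L ^ (-1 + δ) * (y ^ (-(1 + δ / 2)) * z ^ (-(1 + δ / 2))) := by positivity
  rw [mul_add, mul_add]
  obtain ⟨hxz', hyz'⟩ | ⟨hxy', hzy'⟩ | ⟨hyx', hzx'⟩ :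
      (x ≤ z ∧ y ≤ z) ∨ (x ≤ y ∧ z ≤ y) ∨ (y ≤ x ∧ z ≤ x) := by grind
  · linarith [hlargest hx hy hxz' hyz' (hmax.trans (max_le (max_le hxz' hyz') le_rfl))]
  · rw [mul_right_comm]
    linarith [hlargest hx hz hxy' hzy' (hmax.trans (max_le (max_le hxy' le_rfl) hzy'))]
  · rw [mul_assoc, mul_comm]
    linarith [hlargest hy hz hyx' hzx' (hmax.trans (max_le (max_le le_rfl hyx') hzx'))]

lemma div_two_rpow_neg_one_add_le {δ x : ℝ} (hδ : 0 ≤ δ) (hx : 0 ≤ x) :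
    (x / 2) ^ (-1 + δ) ≤ 2 * x ^ (-1 + δ) := by
  have htwo : (2 : ℝ)⁻¹ ≤ 2 ^ (-1 + δ) := by
    rw [← Real.rpow_neg_one]
    exact Real.rpow_le_rpow_of_exponent_le one_le_two (by linarith)
  rw [Real.div_rpow hx two_pos.le, div_eq_inv_mul]
  gcongr
  exact inv_le_of_inv_le₀ two_pos htwo

lemma le_one_add_abs_floor (t : ℝ) : t ≤ 1 + |(⌊t⌋ : ℝ)| := by
  linarith [Int.lt_floor_add_one t, le_abs_self (⌊t⌋ : ℝ)]

lemma one_add_abs_floor_le_two_mul {t : ℝ} (ht : 1 ≤ t) : 1 + |(⌊t⌋ : ℝ)| ≤ 2 * t := by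
  have hfloor : (0 : ℝ) ≤ ⌊t⌋ := by exact_mod_cast Int.floor_nonneg.mpr (zero_le_one.trans ht)
  rw [abs_of_nonneg hfloor]
  linarith [Int.floor_le t]

lemma one_add_abs_sub_floor_le_three_mul {ε₃ ε₄ : ℝ} (h₃ : |ε₃| ≤ 1) (h₄ : |ε₄| ≤ 1)
    (τ s t : ℝ) :
    1 + |τ - ε₃ * ⌊s⌋ - ε₄ * ⌊t⌋| ≤ 3 * (1 + |τ - ε₃ * s - ε₄ * t|) := by
  have hfract {ε : ℝ} (hε : |ε| ≤ 1) (u : ℝ) : |ε * Int.fract u| ≤ 1 := by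
    rw [abs_mul, Int.abs_fract]
    exact mul_le_one₀ hε (Int.fract_nonneg u) (Int.fract_lt_one u).le
  have hfloor : τ - ε₃ * ⌊s⌋ - ε₄ * ⌊t⌋ =
      τ - ε₃ * s - ε₄ * t + ε₃ * Int.fract s + ε₄ * Int.fract t := by
    simp only [Int.fract]
    ring
  rw [hfloor]
  linarith [abs_add_three (τ - ε₃ * s - ε₄ * t) (ε₃ * Int.fract s) (ε₄ * Int.fract t),
    hfract h₃ s, hfract h₄ t, abs_nonneg (τ - ε₃ * s - ε₄ * t)]

/-- The summand of the resonance sum at output frequency `n` and input frequencies `m`, `n - m`,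
with an arbitrary modulation `τ` in place of `± jb n`. -/
noncomputable def resonanceTerm (τ ε₃ ε₄ : ℝ) (n m : Fin 3 → ℤ) : ℝ :=
  (jb m ^ 2 * jb (n - m) ^ 2 * (1 + |τ - ε₃ * jb m - ε₄ * jb (n - m)|))⁻¹

lemma jb_div_two_le_max (n m : Fin 3 → ℤ) :
    jb n / 2 ≤ max (1 + |(⌊jb m⌋ : ℝ)|) (1 + |(⌊jb (n - m)⌋ : ℝ)|) := by
  have htriangle := jb_add_le m (n - m)
  rw [add_sub_cancel] at htriangle
  have hm := (le_one_add_abs_floor (jb m)).trans (le_max_left _ (1 + |(⌊jb (n - m)⌋ : ℝ)|))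
  have hnm := (le_one_add_abs_floor (jb (n - m))).trans (le_max_right (1 + |(⌊jb m⌋ : ℝ)|) _)
  linarith

lemma resonanceTerm_le_inv_floor {ε₃ ε₄ : ℝ} (h₃ : |ε₃| ≤ 1) (h₄ : |ε₄| ≤ 1) (τ : ℝ)
    (n m : Fin 3 → ℤ) :
    resonanceTerm τ ε₃ ε₄ n m ≤ 48 * ((1 + |(⌊jb m⌋ : ℝ)|) ^ 2 *
      (1 + |(⌊jb (n - m)⌋ : ℝ)|) ^ 2 * (1 + |τ - ε₃ * ⌊jb m⌋ - ε₄ * ⌊jb (n - m)⌋|))⁻¹ := by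
  have hm := one_add_abs_floor_le_two_mul (one_le_jb m)
  have hnm := one_add_abs_floor_le_two_mul (one_le_jb (n - m))
  have hres := one_add_abs_sub_floor_le_three_mul h₃ h₄ τ (jb m) (jb (n - m))
  rw [← div_le_iff₀' two_pos] at hm hnm
  rw [← div_le_iff₀' three_pos] at hres
  calc resonanceTerm τ ε₃ ε₄ n m
      ≤ (((1 + |(⌊jb m⌋ : ℝ)|) / 2) ^ 2 * ((1 + |(⌊jb (n - m)⌋ : ℝ)|) / 2) ^ 2 *
          ((1 + |τ - ε₃ * ⌊jb m⌋ - ε₄ * ⌊jb (n - m)⌋|) / 3))⁻¹ := by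
        unfold resonanceTerm
        gcongr
    _ = 48 * ((1 + |(⌊jb m⌋ : ℝ)|) ^ 2 * (1 + |(⌊jb (n - m)⌋ : ℝ)|) ^ 2 *
          (1 + |τ - ε₃ * ⌊jb m⌋ - ε₄ * ⌊jb (n - m)⌋|))⁻¹ := by
        field_simp
        norm_num

lemma resonanceTerm_le_of_shellIndex_eq {δ ε₃ ε₄ : ℝ} (hδ0 : 0 ≤ δ) (hδ1 : δ ≤ 1) (h₃ : |ε₃| ≤ 1)
    (h₄ : |ε₄| ≤ 1) (τ : ℝ) {n m : Fin 3 → ℤ} {p : ℤ × ℤ} (hp : shellIndex n m = p) :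
    resonanceTerm τ ε₃ ε₄ n m ≤ 96 * jb n ^ (-1 + δ) *
      ((1 + |(p.1 : ℝ)|) * (1 + |(p.2 : ℝ)|))⁻¹ * shellWeight (1 + δ / 2) τ ε₃ ε₄ p := by
  subst hp
  let x : ℝ := 1 + |(⌊jb m⌋ : ℝ)|
  let y : ℝ := 1 + |(⌊jb (n - m)⌋ : ℝ)|
  let z : ℝ := 1 + |τ - ε₃ * ⌊jb m⌋ - ε₄ * ⌊jb (n - m)⌋|
  let w := shellWeight (1 + δ / 2) τ ε₃ ε₄ (shellIndex n m)
  have hn := jb_pos n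
  have hx : 0 < x := by positivity
  have hy : 0 < y := by positivity
  have hz : 0 < z := by positivity
  have hw : 0 ≤ w := shellWeight_nonneg _ _ _ _ _
  calc resonanceTerm τ ε₃ ε₄ n m ≤ 48 * (x ^ 2 * y ^ 2 * z)⁻¹ :=
        resonanceTerm_le_inv_floor h₃ h₄ τ n m
    _ = 48 * (x * y)⁻¹ * (x * y * z)⁻¹ := by
        field_simp
    _ ≤ 48 * (x * y)⁻¹ * ((jb n / 2) ^ (-1 + δ) * w) := by
        gcongr
        exact inv_mul_mul_le_rpow_mul_sum hδ0 hδ1 hx hy hz (half_pos hn)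
          (le_max_of_le_left (jb_div_two_le_max n m))
    _ ≤ 48 * (x * y)⁻¹ * (2 * jb n ^ (-1 + δ) * w) := by
        gcongr
        exact div_two_rpow_neg_one_add_le hδ0 hn.le
    _ = 96 * jb n ^ (-1 + δ) * (x * y)⁻¹ * w := by
        ring

lemma tsum_resonanceTerm_shellIndex_fiber_le {δ ε₃ ε₄ : ℝ} (hδ0 : 0 ≤ δ) (hδ1 : δ ≤ 1)
    (h₃ : |ε₃| ≤ 1) (h₄ : |ε₄| ≤ 1) (τ : ℝ) (n : Fin 3 → ℤ) (p : ℤ × ℤ) :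
    ∑' m : shellIndex n ⁻¹' {p}, ENNReal.ofReal (resonanceTerm τ ε₃ ε₄ n m) ≤
      ENNReal.ofReal (240000 * Real.pi * jb n ^ (-2 + δ)) *
        ENNReal.ofReal (shellWeight (1 + δ / 2) τ ε₃ ε₄ p) := by
  have hn := jb_pos n
  let x : ℝ := (1 + |(p.1 : ℝ)|) * (1 + |(p.2 : ℝ)|)
  let w := shellWeight (1 + δ / 2) τ ε₃ ε₄ p
  have hx : 0 < x := by positivity
  have hpow : jb n ^ (-2 + δ) = jb n ^ (-1 + δ) / jb n := by
    rw [← Real.rpow_sub_one hn.ne']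
    ring_nf
  calc ∑' m : shellIndex n ⁻¹' {p}, ENNReal.ofReal (resonanceTerm τ ε₃ ε₄ n m)
      ≤ ∑' _ : shellIndex n ⁻¹' {p}, ENNReal.ofReal (96 * jb n ^ (-1 + δ) * x⁻¹ * w) :=
        ENNReal.tsum_le_tsum fun m => ENNReal.ofReal_le_ofReal
          (resonanceTerm_le_of_shellIndex_eq hδ0 hδ1 h₃ h₄ τ m.2)
    _ = (shellIndex n ⁻¹' {p}).encard * ENNReal.ofReal (96 * jb n ^ (-1 + δ) * x⁻¹ * w) :=
        ENNReal.tsum_set_const _ _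
    _ ≤ ENNReal.ofReal (2500 * Real.pi * x / jb n) *
          ENNReal.ofReal (96 * jb n ^ (-1 + δ) * x⁻¹ * w) := by
        gcongr
        exact encard_shellIndex_fiber_le n p
    _ = ENNReal.ofReal (240000 * Real.pi * jb n ^ (-2 + δ)) * ENNReal.ofReal w := by
        rw [← ENNReal.ofReal_mul (by positivity), ← ENNReal.ofReal_mul (by positivity), hpow]
        congr 1
        field_simp
        ring

end ShellEstimates

theorem weighted_resonance_sum_bound_general {δ : ℝ} (hδ : 0 < δ) :
    ∃ C : ℝ, 0 < C ∧ ∀ (n : Fin 3 → ℤ) (τ ε₃ ε₄ : ℝ), |ε₃| = 1 → |ε₄| = 1 →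
      ∑' m : Fin 3 → ℤ, ENNReal.ofReal
          ((jb m ^ 2 * jb (n - m) ^ 2 * (1 + |τ - ε₃ * jb m - ε₄ * jb (n - m)|))⁻¹)
        ≤ ENNReal.ofReal (C * jb n ^ (-2 + δ)) := by
  wlog hδ1 : δ ≤ 1 generalizing δ
  · obtain ⟨C, hC, hbound⟩ := this one_pos le_rfl
    refine ⟨C, hC, fun n τ ε₃ ε₄ h₃ h₄ => (hbound n τ ε₃ ε₄ h₃ h₄).trans ?_⟩
    have hn := one_le_jb n
    have hδ' : 1 ≤ δ := (not_le.mp hδ1).le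
    gcongr
  obtain ⟨M, hM, hsum⟩ :=
    exists_forall_tsum_ofReal_shellWeight_le (by linarith : 1 < 1 + δ / 2)
  refine ⟨240000 * Real.pi * M, by positivity, fun n τ ε₃ ε₄ h₃ h₄ => ?_⟩
  have hn := jb_pos n
  calc ∑' m : Fin 3 → ℤ, ENNReal.ofReal (resonanceTerm τ ε₃ ε₄ n m)
      = ∑' p : ℤ × ℤ, ∑' m : shellIndex n ⁻¹' {p}, ENNReal.ofReal (resonanceTerm τ ε₃ ε₄ n m) :=
        (ENNReal.tsum_fiberwise _ (shellIndex n)).symm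
    _ ≤ ∑' p : ℤ × ℤ, ENNReal.ofReal (240000 * Real.pi * jb n ^ (-2 + δ)) *
          ENNReal.ofReal (shellWeight (1 + δ / 2) τ ε₃ ε₄ p) :=
        ENNReal.tsum_le_tsum fun p =>
          tsum_resonanceTerm_shellIndex_fiber_le hδ.le hδ1 h₃.le h₄.le τ n p
    _ ≤ ENNReal.ofReal (240000 * Real.pi * jb n ^ (-2 + δ)) * ENNReal.ofReal M := by
        rw [ENNReal.tsum_mul_left]
        gcongr
        exact hsum τ ε₃ ε₄ h₃ h₄
    _ = ENNReal.ofReal (240000 * Real.pi * M * jb n ^ (-2 + δ)) := by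
        rw [← ENNReal.ofReal_mul (by positivity), mul_right_comm]

theorem weighted_resonance_sum_bound
    (δ : ℝ) (hδ0 : 0 < δ) (hδ1 : δ ≤ 1) :
    ∃ C : ℝ, 0 < C ∧ ∀ (n : Fin 3 → ℤ) (ε₁ ε₃ ε₄ : ℝ),
      (ε₁ = 1 ∨ ε₁ = -1) → (ε₃ = 1 ∨ ε₃ = -1) → (ε₄ = 1 ∨ ε₄ = -1) →
      ∑' n₁ : Fin 3 → ℤ,
          ENNReal.ofReal
            ((jb n₁ ^ 2 * jb (n - n₁) ^ 2 *
                (1 + |ε₁ * jb n - ε₃ * jb n₁ - ε₄ * jb (n - n₁)|))⁻¹)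
        ≤ ENNReal.ofReal (C * jb n ^ (-2 + δ)) := by
  obtain ⟨C, hC, hbound⟩ := weighted_resonance_sum_bound_general hδ0
  exact ⟨C, hC, fun n ε₁ ε₃ ε₄ _ h₃ h₄ => hbound n (ε₁ * jb n) ε₃ ε₄
    ((abs_eq one_pos.le).mpr h₃) ((abs_eq one_pos.le).mpr h₄)⟩
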